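/- arXiv:1304.5262 — 4 statements merged into one kernel-verified Lean document; each statement's English description precedes it below -/
import Mathlib

section
/- For every natural number N with N ≥ 4, the number of primes less than or equal to N is at least N divided by the base-2 logarithm of N; that is, (N : ℝ) / logb 2 N ≤ π(N). -/
open Real

theorem leibniz_dvd (D : ℕ) (k : ℕ) : ∀ n, k ≤ n → (∀ j, 1 ≤ j → j ≤ n + 1 → j ∣ D) →
    (n + 1) * n.choose k ∣ D := by
  induction k with
  | zero => intro n _ h; simpa using h (n+1) (by omega) le_rfl
  | succ k ih =>
    intro n hn h
    obtain ⟨m, rfl⟩ : ∃ m, n = m + 1 := ⟨n - 1, by omega⟩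
    obtain ⟨a, ha⟩ := ih m (by omega) (fun j h1 h2 => h j h1 (by omega))
    obtain ⟨b, hb⟩ := ih (m+1) (by omega) h
    have h1 : (m + 1) * m.choose k = (m+1).choose (k+1) * (k+1) := Nat.add_one_mul_choose_eq m k
    have h2 : m.choose k * (m + 1) = (m+1).choose k * (m + 1 - k) := Nat.choose_mul_succ_eq m k
    obtain ⟨t, rfl⟩ : ∃ t, m = k + t := ⟨m - k, by omega⟩
    have h3 : k + t + 1 - k = t + 1 := by omega
    rw [h3] at h2
    have hx : 0 < (k+t).choose k := Nat.choose_pos (by omega)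
    generalize (k+t).choose k = x at *
    generalize (k+t+1).choose (k+1) = y at *
    generalize (k+t+1).choose k = z at *
    have key : ((((k + t + 1 + 1) * y : ℕ)) : ℤ) ∣ (D : ℤ) := by
      refine ⟨(a : ℤ) - b, ?_⟩
      zify at *
      have hk : (k : ℤ) + 1 ≠ 0 := by positivity
      apply mul_left_cancel₀ hk
      -- (k+1) y = (k+t+1) x = (t+1) z
      linear_combination ((k:ℤ) + t + 2) * ha - ((t:ℤ) + 1) * hb + ((k:ℤ) + t + 2) * a * h1 - ((k:ℤ) + t + 2) * b * (h1 - h2)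
    exact_mod_cast key

theorem lcm_lower (m D : ℕ) (hm : 1 ≤ m) (hD : 0 < D)
    (h : ∀ j, 1 ≤ j → j ≤ 2 * m + 1 → j ∣ D) : m * 4 ^ m ≤ D := by
  have hA := leibniz_dvd D m (2*m) (by omega) h
  obtain ⟨q, rfl⟩ : ∃ q, m = q + 1 := ⟨m - 1, by omega⟩
  have hB := leibniz_dvd D q (2*q+1) (by omega) (fun j h1 h2 => h j h1 (by omega))
  have e : (2 * q + 1 + 1) * (2*q+1).choose q = (2*(q+1)).choose (q+1) * (q+1) :=
    Nat.add_one_mul_choose_eq (2*q+1) q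
  rw [e] at hB
  have h4 := Nat.four_pow_le_two_mul_add_one_mul_central_binom (q+1)
  have hX : 0 < (2*(q+1)).choose (q+1) := Nat.choose_pos (by omega)
  generalize (2*(q+1)).choose (q+1) = X at *
  obtain ⟨E, rfl⟩ : X ∣ D := dvd_trans (dvd_mul_right _ _) hB
  have hB' := Nat.dvd_of_mul_dvd_mul_left hX hB
  rw [mul_comm] at hA
  have hA' := Nat.dvd_of_mul_dvd_mul_left hX hA
  have hc : Nat.Coprime (q+1) (2*(q+1)+1) := by
    rw [mul_comm 2]; simp
  have hE := Nat.le_of_dvd (Nat.pos_of_mul_pos_left hD) (hc.mul_dvd_of_dvd_of_dvd hB' hA')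
  calc (q+1) * 4^(q+1) ≤ (q+1) * ((2*(q+1)+1) * X) := Nat.mul_le_mul_left _ h4
    _ = X * ((q+1) * (2*(q+1)+1)) := by ring
    _ ≤ X * E := Nat.mul_le_mul_left _ hE

theorem two_pow_le_lcm (N : ℕ) (hN : 9 ≤ N) : 2 ^ N ≤ Nat.lcmUpto N := by
  obtain ⟨m, hm⟩ : ∃ m, N = 2 * m + 1 ∨ N = 2 * m + 2 := ⟨(N-1)/2, by omega⟩
  have := lcm_lower m (Nat.lcmUpto N) (by omega) (Nat.lcmUpto_pos N)
    (fun j h1 h2 => Finset.dvd_lcm (f := id) (by simp; omega))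
  have h4 : 4 * 4 ^ m ≤ m * 4 ^ m := Nat.mul_le_mul_right _ (by omega)
  have e : (2:ℕ)^(2*m) = 4^m := by rw [pow_mul]; norm_num
  rcases hm with h | h
  · have : 2 ^ N = 2 * 4 ^ m := by rw [h, pow_succ, e]; ring
    omega
  · have : 2 ^ N = 4 * 4 ^ m := by rw [h, pow_add, e]; ring
    omega

theorem pi_lower_bound (N : ℕ) (hN : 4 ≤ N) :
    (N : ℝ) / Real.logb 2 N ≤ (Nat.primeCounting N : ℝ) := by
  have hN1 : (1:ℝ) < N := by exact_mod_cast (by omega : 1 < N)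
  have hl : 0 < Real.log N := Real.log_pos hN1
  have hl2 : 0 < Real.log 2 := Real.log_pos (by norm_num)
  have main : (N:ℝ) * Real.log 2 ≤ Nat.primeCounting N * Real.log N := by
    by_cases h9 : 9 ≤ N
    · refine le_trans ?_ (Chebyshev.psi_le_primeCounting_mul_log N)
      rw [Chebyshev.psi_eq_log_lcmUpto, ← Real.log_pow]
      exact Real.log_le_log (by positivity) (by exact_mod_cast two_pow_le_lcm N h9)
    · have : 2 ^ N ≤ N ^ Nat.primeCounting N := by
        push Not at h9
        interval_cases N <;> decide
      rw [← Real.log_pow, ← Real.log_pow]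
      exact Real.log_le_log (by positivity) (by exact_mod_cast this)
  rw [Real.logb, div_div_eq_mul_div, div_le_iff₀ hl]
  exact main
end

section
/- For every real ε > 0 there exists a natural number N₀ such that for all natural numbers N ≥ N₀ one has (log 2 − ε) · N / log N ≤ π(N), where log denotes the natural logarithm. -/
open Real

theorem erdos_kalmar_lower (ε : ℝ) (hε : 0 < ε) :
    ∃ N₀ : ℕ, ∀ N : ℕ, N₀ ≤ N →
      (Real.log 2 - ε) * N / Real.log N ≤ (Nat.primeCounting N : ℝ) := by
  have h1 := Real.isLittleO_log_id_atTop.bound (half_pos hε)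
  obtain ⟨A, hA⟩ := Filter.eventually_atTop.mp h1
  refine ⟨⌈A⌉₊ + 1, fun N hN => ?_⟩
  have hN1 : (1 : ℝ) ≤ N := by exact_mod_cast (by omega : 1 ≤ N)
  have hAN : A ≤ (N : ℝ) + 1 := by
    have h2 := Nat.le_ceil A
    have h3 : ((⌈A⌉₊ + 1 : ℕ) : ℝ) ≤ N := by exact_mod_cast hN
    push_cast at h3
    linarith
  have h4 := hA _ hAN
  simp only [id, Real.norm_eq_abs] at h4
  rw [abs_of_nonneg (by linarith : (0 : ℝ) ≤ (N : ℝ) + 1)] at h4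
  have h5 := le_trans (le_abs_self _) h4
  have h6 : ε / 2 * ((N : ℝ) + 1) ≤ ε * N := by nlinarith
  refine le_trans ?_ (Chebyshev.pi_ge N)
  exact div_le_div_of_nonneg_right (by linarith) (Real.log_nonneg hN1)
end

section
/- Let a and x be real numbers with a ≥ 0 and x > 1, and define n = x · (√(a + x) − √a)² / (2 · logb 2 x). Then n > 0 and a = (x² − 2·n·logb 2 x)² / (8·n·x·logb 2 x). -/
open Real

theorem algo_531_inverse (a x n : ℝ) (ha : 0 ≤ a) (hx : 1 < x)
    (hn : n = x * (Real.sqrt (a + x) - Real.sqrt a) ^ 2 / (2 * Real.logb 2 x)) :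
    0 < n ∧ a = (x ^ 2 - 2 * n * Real.logb 2 x) ^ 2 / (8 * n * x * Real.logb 2 x) := by
  have hL : 0 < Real.logb 2 x := Real.logb_pos (by norm_num) hx
  have hx0 : 0 < x := by linarith
  have ht : Real.sqrt a ^ 2 = a := Real.sq_sqrt ha
  have hs : Real.sqrt (a + x) ^ 2 = a + x := Real.sq_sqrt (by linarith)
  have hd : 0 < Real.sqrt (a + x) - Real.sqrt a :=
    sub_pos.mpr (Real.sqrt_lt_sqrt ha (by linarith))
  have hpos : 0 < n := by rw [hn]; positivity
  refine ⟨hpos, ?_⟩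
  generalize Real.logb 2 x = L at *
  generalize Real.sqrt (a + x) = s at *
  generalize Real.sqrt a = t at *
  have h1 : 2 * n * L = x * (s - t) ^ 2 := by
    rw [hn]; field_simp
  have h2 : 8 * n * x * L = 4 * x * (x * (s - t) ^ 2) := by
    rw [← h1]; ring
  have hxe : x - (s - t) ^ 2 = 2 * t * (s - t) := by linear_combination ht - hs
  have h3 : x ^ 2 - x * (s - t) ^ 2 = x * (2 * t * (s - t)) := by
    rw [← hxe]; ring
  rw [h1, h2, h3, eq_div_iff (by positivity), ← ht]
  ring
end

section
/- Let x and n be real numbers with x > 1, n > 0 and 2·n·logb 2 x ≤ x², and define b = (x² + 2·n·logb 2 x)² / (8·n·x·logb 2 x). Then x ≤ b and x · (√b − √(b − x))² / (2 · logb 2 x) = n. -/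
open Real

theorem algo_541 (x n b : ℝ) (hx : 1 < x) (hn : 0 < n)
    (h : 2 * n * Real.logb 2 x ≤ x ^ 2)
    (hb : b = (x ^ 2 + 2 * n * Real.logb 2 x) ^ 2 / (8 * n * x * Real.logb 2 x)) :
    x ≤ b ∧ x * (Real.sqrt b - Real.sqrt (b - x)) ^ 2 / (2 * Real.logb 2 x) = n := by
  have hL : 0 < Real.logb 2 x := Real.logb_pos (by norm_num) hx
  generalize Real.logb 2 x = L at *
  have hx0 : 0 < x := by linarith
  have hD : 0 < 8 * n * x * L := by positivity
  have e : b - x = (x ^ 2 - 2 * n * L) ^ 2 / (8 * n * x * L) := by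
    rw [hb]; field_simp; ring
  have hnn : 0 ≤ b - x := by rw [e]; positivity
  refine ⟨by linarith, ?_⟩
  have s1 : Real.sqrt b = (x ^ 2 + 2 * n * L) / Real.sqrt (8 * n * x * L) := by
    rw [hb, Real.sqrt_div (by positivity), Real.sqrt_sq (by positivity)]
  have s2 : Real.sqrt (b - x) = (x ^ 2 - 2 * n * L) / Real.sqrt (8 * n * x * L) := by
    rw [e, Real.sqrt_div (by positivity), Real.sqrt_sq (by linarith)]
  rw [s1, s2, ← sub_div, div_pow, Real.sq_sqrt hD.le]
  field_simp
  ring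
end
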